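/- arXiv:1808.02329 — 7 statements merged into one kernel-verified Lean document; each statement's English description precedes it below -/
import Mathlib

section
/- Let Y be a metric space and let the additive group ℝ act on Y by isometries, in such a way that for a fixed point q ∈ Y the orbit map t ↦ t·q is continuous. Let η > 0. Suppose there exist v ∈ ℝ and a positive integer k such that the finite set A·q := {(j·v)·q : j ∈ ℤ, |j| ≤ k} has positive diameter and the Hausdorff distance between A·q and A²·q := {(2j·v)·q : j ∈ ℤ, |j| ≤ k} is strictly less than η·diam(A·q). Then there exists w ∈ ℝ such that the set B·q := {(t·w)·q : t ∈ [−1,1]} has diameter in (0,∞) and the Hausdorff distance between B·q and B²·q := {(2t·w)·q : t ∈ [−1,1]} is strictly less than η·diam(B·q). (This is the implication (1) ⟹ (2) of Lemma 3.4 of the paper, for the group ℝ.) -/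
/-!
The point `2kv · q` of `A² · q` is close to some `jv · q` with `|j| ≤ k`, so `w = (2k - j)v` moves
`q` by less than `η * diam (A · q)`. Since `2k - j ≥ k`, the segment `[-w, w]` contains the
progression `A`, and every point of `[-2w, 2w]` differs from a point of `[-w, w]` by `0` or `±w`, so
doubling the segment moves its orbit by no more than the displacement of `q` under `w`.
-/

open Metric Set

section IsometricAction

variable {G Y : Type*} [AddGroup G] [PseudoMetricSpace Y] [AddAction G Y] [IsIsometricVAdd G Y]

theorem dist_vadd_vadd_same (a b : G) (q : Y) :
    dist (a +ᵥ q) (b +ᵥ q) = dist q ((-a + b) +ᵥ q) := by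
  rw [← dist_vadd a q, vadd_vadd, add_neg_cancel_left]

theorem dist_neg_vadd_self (a : G) (q : Y) : dist q (-a +ᵥ q) = dist q (a +ᵥ q) := by
  rw [← dist_vadd a, vadd_neg_vadd, dist_comm]

end IsometricAction

section OrbitSets

variable {E Y : Type*} [AddCommGroup E] [Module ℝ E] [AddAction E Y]

/-- The orbit `A · q` of a point `q` under the symmetric arithmetic progression
`A = {j • v : j ∈ ℤ, |j| ≤ k}` (form I). Its double `A² · q` is `orbitProgression (2 • v) k q`. -/
def orbitProgression (v : E) (k : ℕ) (q : Y) : Set Y :=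
  {y | ∃ j : ℤ, |j| ≤ (k : ℤ) ∧ y = ((j : ℝ) • v) +ᵥ q}

/-- The orbit `B · q` of a point `q` under the symmetric segment `B = {t • w : t ∈ [-1, 1]}`
(form II). Its double `B² · q` is `orbitSegment (2 • w) q`. -/
def orbitSegment (w : E) (q : Y) : Set Y :=
  {y | ∃ t ∈ Icc (-1 : ℝ) 1, y = (t • w) +ᵥ q}

theorem orbitProgression_two_smul (v : E) (k : ℕ) (q : Y) :
    orbitProgression ((2 : ℝ) • v) k q =
      {y | ∃ j : ℤ, |j| ≤ (k : ℤ) ∧ y = ((2 * (j : ℝ)) • v) +ᵥ q} := by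
  simp only [orbitProgression, smul_smul, mul_comm]

theorem orbitSegment_two_smul (w : E) (q : Y) :
    orbitSegment ((2 : ℝ) • w) q = {y | ∃ t ∈ Icc (-1 : ℝ) 1, y = ((2 * t) • w) +ᵥ q} := by
  simp only [orbitSegment, smul_smul, mul_comm]

theorem orbitProgression_nonempty (v : E) (k : ℕ) (q : Y) : (orbitProgression v k q).Nonempty :=
  ⟨_, 0, by simp, rfl⟩

theorem orbitProgression_finite (v : E) (k : ℕ) (q : Y) : (orbitProgression v k q).Finite := by
  refine ((finite_Icc (-k : ℤ) k).image fun j : ℤ => ((j : ℝ) • v) +ᵥ q).subset ?_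
  rintro _ ⟨j, hj, rfl⟩
  exact ⟨j, abs_le.mp hj, rfl⟩

theorem orbitSegment_subset_orbitSegment_two_smul (w : E) (q : Y) :
    orbitSegment w q ⊆ orbitSegment ((2 : ℝ) • w) q := by
  rintro _ ⟨t, ⟨ht₁, ht₂⟩, rfl⟩
  refine ⟨t / 2, ⟨by linarith, by linarith⟩, ?_⟩
  rw [smul_smul, div_mul_cancel₀ t two_ne_zero]

theorem orbitProgression_subset_orbitSegment (v : E) {k : ℕ} {c : ℝ} (hkc : k ≤ c) (q : Y) :
    orbitProgression v k q ⊆ orbitSegment (c • v) q := by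
  rintro _ ⟨j, hj, rfl⟩
  have hc : 0 ≤ c := k.cast_nonneg.trans hkc
  have hjc : |(j : ℝ)| ≤ c := le_trans (mod_cast hj) hkc
  have hj_zero : c = 0 → (j : ℝ) = 0 := fun h => abs_nonpos_iff.mp (h ▸ hjc)
  refine ⟨j / c, abs_le.mp ?_, ?_⟩
  · rw [abs_div, abs_of_nonneg hc]
    exact div_le_one_of_le₀ hjc hc
  · rw [smul_smul, div_mul_cancel_of_imp hj_zero]

end OrbitSets

theorem isBounded_orbitSegment {E Y : Type*} [AddCommGroup E] [Module ℝ E] [PseudoMetricSpace Y]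
    [AddAction E Y] {w : E} {q : Y} (hcont : Continuous fun t : ℝ => (t • w) +ᵥ q) :
    Bornology.IsBounded (orbitSegment w q) := by
  refine ((isCompact_Icc (a := -1) (b := 1)).image hcont).isBounded.subset ?_
  rintro _ ⟨t, ht, rfl⟩
  exact ⟨t, ht, rfl⟩

section AlmostSubgroups

variable {E Y : Type*} [AddCommGroup E] [Module ℝ E] [PseudoMetricSpace Y] [AddAction E Y]
  [IsIsometricVAdd E Y]

theorem exists_le_dist_smul_vadd_lt_of_hausdorffDist_lt {v : E} {k : ℕ} {q : Y} {r : ℝ}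
    (h : hausdorffDist (orbitProgression v k q) (orbitProgression ((2 : ℝ) • v) k q) < r) :
    ∃ c : ℝ, k ≤ c ∧ dist q ((c • v) +ᵥ q) < r := by
  have hfin : hausdorffEDist (orbitProgression v k q) (orbitProgression ((2 : ℝ) • v) k q) ≠ ⊤ :=
    hausdorffEDist_ne_top_of_nonempty_of_bounded
      (orbitProgression_nonempty _ _ _) (orbitProgression_nonempty _ _ _)
      (orbitProgression_finite _ _ _).isBounded (orbitProgression_finite _ _ _).isBounded
  have hend : ((k : ℝ) • (2 : ℝ) • v) +ᵥ q ∈ orbitProgression ((2 : ℝ) • v) k q :=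
    ⟨k, by simp, by simp⟩
  obtain ⟨_, ⟨j, hj, rfl⟩, hdist⟩ := exists_dist_lt_of_hausdorffDist_lt' hend h hfin
  have hjk : (j : ℝ) ≤ k := mod_cast (abs_le.mp hj).2
  refine ⟨k * 2 - j, by linarith, ?_⟩
  rwa [dist_vadd_vadd_same, neg_add_eq_sub, smul_smul, ← sub_smul] at hdist

theorem exists_mem_orbitSegment_dist_le {w : E} {q y : Y}
    (hy : y ∈ orbitSegment ((2 : ℝ) • w) q) :
    ∃ x ∈ orbitSegment w q, dist y x ≤ dist q (w +ᵥ q) := by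
  rw [orbitSegment_two_smul] at hy
  obtain ⟨t, ⟨ht₁, ht₂⟩, rfl⟩ := hy
  have dist_eq (s : ℝ) :
      dist (((2 * t) • w) +ᵥ q) ((s • w) +ᵥ q) = dist q (((s - 2 * t) • w) +ᵥ q) := by
    rw [dist_vadd_vadd_same, neg_add_eq_sub, sub_smul]
  rcases lt_or_ge (2 * t) (-1) with hlow | hlow
  · refine ⟨_, ⟨2 * t + 1, ⟨by linarith, by linarith⟩, rfl⟩, ?_⟩
    rw [dist_eq, add_sub_cancel_left, one_smul]
  rcases le_or_gt (2 * t) 1 with hhigh | hhigh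
  · exact ⟨_, ⟨2 * t, ⟨hlow, hhigh⟩, rfl⟩, by simp⟩
  · refine ⟨_, ⟨2 * t - 1, ⟨by linarith, by linarith⟩, rfl⟩, ?_⟩
    rw [dist_eq, sub_sub_cancel_left, neg_smul, one_smul, dist_neg_vadd_self]

theorem hausdorffDist_orbitSegment_two_smul_le (w : E) (q : Y) :
    hausdorffDist (orbitSegment w q) (orbitSegment ((2 : ℝ) • w) q) ≤ dist q (w +ᵥ q) :=
  hausdorffDist_le_of_mem_dist dist_nonneg
    (fun x hx => ⟨x, orbitSegment_subset_orbitSegment_two_smul w q hx, by simp⟩)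
    fun _ hy => exists_mem_orbitSegment_dist_le hy

theorem form_I_implies_form_II_general {v : E} {k : ℕ} {q : Y} {η : ℝ}
    (hbdd : ∀ c : ℝ, Bornology.IsBounded (orbitSegment (c • v) q))
    (hdiam : 0 < diam (orbitProgression v k q))
    (hdist : hausdorffDist (orbitProgression v k q) (orbitProgression ((2 : ℝ) • v) k q)
      < η * diam (orbitProgression v k q)) :
    ∃ c : ℝ, 0 < diam (orbitSegment (c • v) q) ∧
      hausdorffDist (orbitSegment (c • v) q) (orbitSegment ((2 : ℝ) • c • v) q)
        < η * diam (orbitSegment (c • v) q) := by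
  obtain ⟨c, hkc, hc⟩ := exists_le_dist_smul_vadd_lt_of_hausdorffDist_lt hdist
  have hη : 0 < η := pos_of_mul_pos_left (hausdorffDist_nonneg.trans_lt hdist) hdiam.le
  have hdiam_le : diam (orbitProgression v k q) ≤ diam (orbitSegment (c • v) q) :=
    diam_mono (orbitProgression_subset_orbitSegment v hkc q) (hbdd c)
  refine ⟨c, hdiam.trans_le hdiam_le, ?_⟩
  calc hausdorffDist (orbitSegment (c • v) q) (orbitSegment ((2 : ℝ) • c • v) q)
      ≤ dist q ((c • v) +ᵥ q) := hausdorffDist_orbitSegment_two_smul_le _ _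
    _ < η * diam (orbitProgression v k q) := hc
    _ ≤ η * diam (orbitSegment (c • v) q) := by gcongr

end AlmostSubgroups

/-- Lemma 3.4 of the paper, implication (1) ⟹ (2), for the group `ℝ`:
if the `ℝ`-action on `Y` by isometries has an `η`-almost subgroup of
one-parameter of form I at `q`, then it has one of form II. -/
theorem form_I_implies_form_II {Y : Type*} [MetricSpace Y] [AddAction ℝ Y]
    (hiso : ∀ t : ℝ, Isometry (fun y : Y => t +ᵥ y))
    (q : Y) (hcont : Continuous (fun t : ℝ => t +ᵥ q))
    (η : ℝ) (hη : 0 < η)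
    (h : ∃ (v : ℝ) (k : ℕ), 0 < k ∧
      0 < Metric.diam {y : Y | ∃ j : ℤ, |j| ≤ (k : ℤ) ∧ y = ((j : ℝ) * v) +ᵥ q} ∧
      Metric.hausdorffDist
          {y : Y | ∃ j : ℤ, |j| ≤ (k : ℤ) ∧ y = ((j : ℝ) * v) +ᵥ q}
          {y : Y | ∃ j : ℤ, |j| ≤ (k : ℤ) ∧ y = ((2 * (j : ℝ)) * v) +ᵥ q}
        < η * Metric.diam {y : Y | ∃ j : ℤ, |j| ≤ (k : ℤ) ∧ y = ((j : ℝ) * v) +ᵥ q}) :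
    ∃ w : ℝ,
      0 < Metric.diam {y : Y | ∃ t ∈ Set.Icc (-1 : ℝ) 1, y = (t * w) +ᵥ q} ∧
      Metric.hausdorffDist
          {y : Y | ∃ t ∈ Set.Icc (-1 : ℝ) 1, y = (t * w) +ᵥ q}
          {y : Y | ∃ t ∈ Set.Icc (-1 : ℝ) 1, y = ((2 * t) * w) +ᵥ q}
        < η * Metric.diam {y : Y | ∃ t ∈ Set.Icc (-1 : ℝ) 1, y = (t * w) +ᵥ q} := by
  obtain ⟨v, k, -, hdiam, hdist⟩ := h
  have : IsIsometricVAdd ℝ Y := ⟨hiso⟩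
  have hbdd (c : ℝ) : Bornology.IsBounded (orbitSegment (c • v) q) :=
    isBounded_orbitSegment (hcont.comp (continuous_mul_const (c • v)))
  obtain ⟨c, hc⟩ := form_I_implies_form_II_general (η := η) hbdd hdiam
    (by rwa [orbitProgression_two_smul])
  rw [orbitSegment_two_smul] at hc
  exact ⟨c • v, hc⟩
end

section
/- Let Y be a metric space and let the additive group ℝ act on Y by isometries, in such a way that for a fixed point q ∈ Y the orbit map t ↦ t·q is continuous. Let η > 0. Suppose there exists w ∈ ℝ such that the set B·q := {(t·w)·q : t ∈ [−1,1]} has positive diameter and the Hausdorff distance between B·q and B²·q := {(2t·w)·q : t ∈ [−1,1]} is strictly less than η·diam(B·q). Then there exist v ∈ ℝ and a positive integer k such that the finite set A·q := {(j·v)·q : j ∈ ℤ, |j| ≤ k} has positive diameter and the Hausdorff distance between A·q and A²·q := {(2j·v)·q : j ∈ ℤ, |j| ≤ k} is strictly less than η·diam(A·q). (This is the implication (2) ⟹ (1) of Lemma 3.4 of the paper, for the group ℝ.) -/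
/-!
The form I sets with step `w / k` are the images of the grid `{j / k : |j| ≤ k}` under the two maps
that send `[-1, 1]` onto the form II sets. The grids converge to `[-1, 1]` in the Hausdorff metric
on nonempty compact sets, and taking images under a continuous map is continuous for that metric.
The diameter is continuous as well, so the two strict inequalities defining an almost subgroup are
an open condition, and they pass from the form II sets to the form I sets for all large `k`.
-/

open Filter Metric Set TopologicalSpace Topology

theorem diam_le_diam_add_two_mul_hausdorffDist {X : Type*} [PseudoMetricSpace X] {s t : Set X}
    (ht : Bornology.IsBounded t) (hst : hausdorffEDist s t ≠ ⊤) :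
    diam s ≤ diam t + 2 * hausdorffDist s t := by
  refine le_of_forall_gt_imp_ge_of_dense fun b hb => ?_
  obtain ⟨r, hr, hrb⟩ : ∃ r, hausdorffDist s t < r ∧ diam t + 2 * r = b :=
    ⟨(b - diam t) / 2, by linarith, by ring⟩
  have hb_nonneg : 0 ≤ b := by
    linarith [diam_nonneg (s := t), hausdorffDist_nonneg (s := s) (t := t)]
  refine diam_le_of_forall_dist_le hb_nonneg fun x hx y hy => ?_
  obtain ⟨x', hx', hxx'⟩ := exists_dist_lt_of_hausdorffDist_lt hx hr hst
  obtain ⟨y', hy', hyy'⟩ := exists_dist_lt_of_hausdorffDist_lt hy hr hst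
  calc
    dist x y ≤ dist x x' + dist x' y' + dist y' y := dist_triangle4 x x' y' y
    _ ≤ r + diam t + r := by
      rw [dist_comm y' y]
      gcongr
      exact dist_le_diam_of_mem ht hx' hy'
    _ = b := by linarith

section NonemptyCompacts

variable {X Y : Type*} [MetricSpace Y]

theorem lipschitzWith_diam_nonemptyCompacts :
    LipschitzWith 2 fun K : NonemptyCompacts Y => diam (K : Set Y) :=
  LipschitzWith.of_le_add_mul 2 fun K L =>
    diam_le_diam_add_two_mul_hausdorffDist L.isCompact.isBounded (edist_ne_top K L)

theorem isOpen_setOf_dist_lt_mul_diam (η : ℝ) :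
    IsOpen {p : NonemptyCompacts Y × NonemptyCompacts Y |
      0 < diam (p.1 : Set Y) ∧ dist p.1 p.2 < η * diam (p.1 : Set Y)} := by
  have hdiam : Continuous fun p : NonemptyCompacts Y × NonemptyCompacts Y => diam (p.1 : Set Y) :=
    lipschitzWith_diam_nonemptyCompacts.continuous.comp continuous_fst
  exact (isOpen_lt continuous_const hdiam).inter
    (isOpen_lt continuous_dist (continuous_const.mul hdiam))

theorem eventually_hausdorffDist_image_lt_mul_diam [TopologicalSpace X] {ι : Type*} {l : Filter ι}
    {K : ι → NonemptyCompacts X} {L : NonemptyCompacts X} (hK : Tendsto K l (𝓝 L))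
    {f g : X → Y} (hf : Continuous f) (hg : Continuous g) {η : ℝ} (hpos : 0 < diam (f '' L))
    (hlt : hausdorffDist (f '' L) (g '' L) < η * diam (f '' L)) :
    ∀ᶠ i in l, 0 < diam (f '' K i) ∧
      hausdorffDist (f '' K i) (g '' K i) < η * diam (f '' K i) := by
  have himages : Tendsto (fun i => ((K i).map f hf, (K i).map g hg)) l
      (𝓝 (L.map f hf, L.map g hg)) :=
    ((hf.nonemptyCompacts_map.tendsto L).comp hK).prodMk_nhds
      ((hg.nonemptyCompacts_map.tendsto L).comp hK)
  exact himages.eventually_mem ((isOpen_setOf_dist_lt_mul_diam η).mem_nhds ⟨hpos, hlt⟩)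

end NonemptyCompacts

/-- The interval `[-1, 1]` as a point of the Hausdorff metric space of nonempty compact sets; it
parametrizes the sets of form II. -/
def symmetricInterval : NonemptyCompacts ℝ where
  carrier := Icc (-1) 1
  isCompact' := isCompact_Icc
  nonempty' := nonempty_Icc.2 (by norm_num)

/-- The grid `{j / k : |j| ≤ k}` in `[-1, 1]` as a nonempty compact set; it parametrizes the sets of
form I. For `k = 0` it is `{0}`, because `0 / 0 = 0`. -/
def symmetricGrid (k : ℕ) : NonemptyCompacts ℝ where
  carrier := (fun j : ℤ => (j / k : ℝ)) '' Icc (-k) k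
  isCompact' := ((finite_Icc _ _).image _).isCompact
  nonempty' := ⟨_, 0, by simp, rfl⟩

theorem coe_symmetricInterval : (symmetricInterval : Set ℝ) = Icc (-1) 1 := rfl

theorem coe_symmetricGrid (k : ℕ) :
    (symmetricGrid k : Set ℝ) = (fun j : ℤ => (j / k : ℝ)) '' Icc (-k) k := rfl

theorem symmetricGrid_subset_symmetricInterval (k : ℕ) :
    (symmetricGrid k : Set ℝ) ⊆ symmetricInterval := by
  rintro _ ⟨j, hj, rfl⟩
  have hj' : |(j : ℝ)| ≤ k := by exact_mod_cast abs_le.2 hj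
  exact abs_le.1 <| by
    rw [abs_div, Nat.abs_cast]
    exact div_le_one_of_le₀ hj' k.cast_nonneg

theorem exists_mem_symmetricGrid_dist_le {k : ℕ} (hk : 0 < k) {t : ℝ}
    (ht : t ∈ symmetricInterval) : ∃ x ∈ symmetricGrid k, dist t x ≤ 1 / k := by
  obtain ⟨ht_lower, ht_upper⟩ : -1 ≤ t ∧ t ≤ 1 := ht
  have hk' : (0 : ℝ) < k := by exact_mod_cast hk
  refine ⟨⌊t * k⌋ / k, ⟨⌊t * k⌋, ⟨?_, ?_⟩, rfl⟩, ?_⟩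
  · rw [Int.le_floor]
    push_cast
    nlinarith [hk']
  · have hfloor_le_k : (⌊t * k⌋ : ℝ) ≤ k := by nlinarith [hk', Int.floor_le (t * k)]
    exact_mod_cast hfloor_le_k
  · have hdiff : t - ⌊t * k⌋ / k = Int.fract (t * k) / k := by
      rw [Int.fract]
      field_simp
    rw [Real.dist_eq, hdiff, abs_div, Int.abs_fract, Nat.abs_cast]
    gcongr
    exact (Int.fract_lt_one _).le

theorem dist_symmetricGrid_symmetricInterval_le {k : ℕ} (hk : 0 < k) :
    dist (symmetricGrid k) symmetricInterval ≤ 1 / k := by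
  have hbound : (0 : ℝ) ≤ 1 / k := by positivity
  exact hausdorffDist_le_of_mem_dist hbound
    (fun x hx => ⟨x, symmetricGrid_subset_symmetricInterval k hx, by rwa [dist_self]⟩)
    fun _ ht => exists_mem_symmetricGrid_dist_le hk ht

theorem tendsto_symmetricGrid : Tendsto symmetricGrid atTop (𝓝 symmetricInterval) := by
  rw [tendsto_iff_dist_tendsto_zero]
  refine squeeze_zero' (.of_forall fun _ => dist_nonneg) ?_ tendsto_one_div_atTop_nhds_zero_nat
  filter_upwards [eventually_gt_atTop 0] with k hk
  exact dist_symmetricGrid_symmetricInterval_le hk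

theorem image_symmetricInterval {Y : Type*} (f : ℝ → Y) :
    f '' symmetricInterval = {y | ∃ t ∈ Icc (-1 : ℝ) 1, y = f t} := by
  ext y
  simp only [coe_symmetricInterval, mem_image, mem_ofPred_eq, eq_comm]

theorem image_symmetricGrid {Y : Type*} (f : ℝ → Y) (k : ℕ) :
    f '' symmetricGrid k = {y | ∃ j : ℤ, |j| ≤ (k : ℤ) ∧ y = f (j / k)} := by
  ext y
  simp only [coe_symmetricGrid, image_image, mem_image, mem_Icc, abs_le, mem_ofPred_eq, eq_comm]

theorem form_II_implies_form_I_general {Y : Type*} [MetricSpace Y] {γ : ℝ → Y}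
    (hγ : Continuous γ) {η : ℝ}
    (h : ∃ w : ℝ,
      0 < diam {y : Y | ∃ t ∈ Icc (-1 : ℝ) 1, y = γ (t * w)} ∧
      hausdorffDist
          {y : Y | ∃ t ∈ Icc (-1 : ℝ) 1, y = γ (t * w)}
          {y : Y | ∃ t ∈ Icc (-1 : ℝ) 1, y = γ ((2 * t) * w)}
        < η * diam {y : Y | ∃ t ∈ Icc (-1 : ℝ) 1, y = γ (t * w)}) :
    ∃ (v : ℝ) (k : ℕ), 0 < k ∧
      0 < diam {y : Y | ∃ j : ℤ, |j| ≤ (k : ℤ) ∧ y = γ ((j : ℝ) * v)} ∧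
      hausdorffDist
          {y : Y | ∃ j : ℤ, |j| ≤ (k : ℤ) ∧ y = γ ((j : ℝ) * v)}
          {y : Y | ∃ j : ℤ, |j| ≤ (k : ℤ) ∧ y = γ ((2 * (j : ℝ)) * v)}
        < η * diam {y : Y | ∃ j : ℤ, |j| ≤ (k : ℤ) ∧ y = γ ((j : ℝ) * v)} := by
  obtain ⟨w, hw⟩ := h
  let f : ℝ → Y := fun t => γ (t * w)
  let g : ℝ → Y := fun t => γ ((2 * t) * w)
  have hf : Continuous f := by fun_prop
  have hg : Continuous g := by fun_prop
  rw [← image_symmetricInterval f, ← image_symmetricInterval g] at hw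
  obtain ⟨k, hgrid, hk⟩ :=
    ((eventually_hausdorffDist_image_lt_mul_diam tendsto_symmetricGrid hf hg hw.1 hw.2).and
      (eventually_gt_atTop 0)).exists
  refine ⟨w / k, k, hk, ?_⟩
  have hf_grid (j : ℤ) : f (j / k) = γ (j * (w / k)) := congrArg γ (by ring)
  have hg_grid (j : ℤ) : g (j / k) = γ ((2 * j) * (w / k)) := congrArg γ (by ring)
  simpa only [image_symmetricGrid, hf_grid, hg_grid] using hgrid

/-- Lemma 3.4 of the paper, implication (2) ⟹ (1), for the group `ℝ`:
if the `ℝ`-action on `Y` by isometries has an `η`-almost subgroup of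
one-parameter of form II at `q`, then it has one of form I. -/
theorem form_II_implies_form_I {Y : Type*} [MetricSpace Y] [AddAction ℝ Y]
    (hiso : ∀ t : ℝ, Isometry (fun y : Y => t +ᵥ y))
    (q : Y) (hcont : Continuous (fun t : ℝ => t +ᵥ q))
    (η : ℝ) (hη : 0 < η)
    (h : ∃ w : ℝ,
      0 < Metric.diam {y : Y | ∃ t ∈ Set.Icc (-1 : ℝ) 1, y = (t * w) +ᵥ q} ∧
      Metric.hausdorffDist
          {y : Y | ∃ t ∈ Set.Icc (-1 : ℝ) 1, y = (t * w) +ᵥ q}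
          {y : Y | ∃ t ∈ Set.Icc (-1 : ℝ) 1, y = ((2 * t) * w) +ᵥ q}
        < η * Metric.diam {y : Y | ∃ t ∈ Set.Icc (-1 : ℝ) 1, y = (t * w) +ᵥ q}) :
    ∃ (v : ℝ) (k : ℕ), 0 < k ∧
      0 < Metric.diam {y : Y | ∃ j : ℤ, |j| ≤ (k : ℤ) ∧ y = ((j : ℝ) * v) +ᵥ q} ∧
      Metric.hausdorffDist
          {y : Y | ∃ j : ℤ, |j| ≤ (k : ℤ) ∧ y = ((j : ℝ) * v) +ᵥ q}
          {y : Y | ∃ j : ℤ, |j| ≤ (k : ℤ) ∧ y = ((2 * (j : ℝ)) * v) +ᵥ q}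
        < η * Metric.diam {y : Y | ∃ j : ℤ, |j| ≤ (k : ℤ) ∧ y = ((j : ℝ) * v) +ᵥ q} :=
  form_II_implies_form_I_general hcont h
end

section
/- Let Y be a metric space, g a surjective isometry of Y, q ∈ Y, and η, r > 0. Assume d(q, g(q)) ≥ r, and assume that for every positive integer k one has max_{i ∈ ℤ, |i| ≤ k} dist(g^{2i}(q), A_k·q) ≥ η·diam(A_k·q), where A_k·q := {g^m(q) : m ∈ ℤ, |m| ≤ k}. Then d(q, g^j(q)) ≥ η·r for every nonzero integer j; consequently the orbit points g^i(q), i ∈ ℤ, are pairwise at distance at least η·r from each other. (This is part (1) of Lemma 3.8 of the paper, with the almost-subgroup defect measured by the one-sided Hausdorff excess.) -/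
/-!
If `|n| ≤ 2k`, then `n - k` or `n + k` has absolute value at most `k`, so `gⁿ q` lies within
`d(q, gᵏ q)` of the truncated orbit `A_k q`. Taking `n = 2i`, the absence of an almost subgroup at
scale `k = |j|` forces `η · diam (A_k q) ≤ d(q, gʲ q)`, and `A_k q` contains both `q` and `g q`.
-/

section

variable {Y : Type*} [PseudoMetricSpace Y] {g : Y ≃ᵢ Y} {q : Y} {η r : ℝ}

theorem dist_zpow_apply_zpow_apply (g : Y ≃ᵢ Y) (q : Y) (a b : ℤ) :
    dist ((g ^ a) q) ((g ^ b) q) = dist q ((g ^ (b - a)) q) := by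
  rw [← (g ^ a).dist_eq q, ← IsometryEquiv.mul_apply, ← zpow_add, add_sub_cancel]

theorem dist_zpow_neg_apply (g : Y ≃ᵢ Y) (q : Y) (a : ℤ) :
    dist q ((g ^ (-a)) q) = dist q ((g ^ a) q) := by
  simpa [dist_comm] using (dist_zpow_apply_zpow_apply g q a 0).symm

theorem dist_zpow_abs_apply (g : Y ≃ᵢ Y) (q : Y) (a : ℤ) :
    dist q ((g ^ |a|) q) = dist q ((g ^ a) q) := by
  rcases abs_choice a with h | h <;> rw [h]
  exact dist_zpow_neg_apply g q a

/-- The truncated orbit `A_k · q` of the cyclic group generated by `g`. The radius `k` is an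
integer; the set is empty for `k < 0`. -/
def truncatedOrbit (g : Y ≃ᵢ Y) (q : Y) (k : ℤ) : Set Y :=
  {y | ∃ m : ℤ, |m| ≤ k ∧ y = (g ^ m) q}

/-- The cyclic group generated by `g` has no `η`-almost subgroup of one-parameter at `q`: at every
scale `k`, the one-sided Hausdorff excess of `A_k² · q` over `A_k · q` is at least
`η * diam (A_k · q)`. As `A_k² · q` is finite, the maximum defining the excess is expressed by
a point attaining the bound. -/
def NoAlmostSubgroupAt (g : Y ≃ᵢ Y) (q : Y) (η : ℝ) : Prop :=
  ∀ k : ℕ, 0 < k → ∃ i : ℤ, |i| ≤ (k : ℤ) ∧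
    η * Metric.diam (truncatedOrbit g q k) ≤
      Metric.infDist ((g ^ (2 * i)) q) (truncatedOrbit g q k)

theorem zpow_apply_mem_truncatedOrbit {m k : ℤ} (hm : |m| ≤ k) :
    (g ^ m) q ∈ truncatedOrbit g q k :=
  ⟨m, hm, rfl⟩

theorem finite_truncatedOrbit (g : Y ≃ᵢ Y) (q : Y) (k : ℤ) : (truncatedOrbit g q k).Finite := by
  refine ((Set.finite_Icc (-k) k).image fun m ↦ (g ^ m) q).subset ?_
  rintro _ ⟨m, hm, rfl⟩
  exact ⟨m, abs_le.mp hm, rfl⟩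

theorem dist_apply_le_diam_truncatedOrbit (g : Y ≃ᵢ Y) (q : Y) {k : ℤ} (hk : 0 < k) :
    dist q (g q) ≤ Metric.diam (truncatedOrbit g q k) := by
  have hq : (g ^ (0 : ℤ)) q ∈ truncatedOrbit g q k :=
    zpow_apply_mem_truncatedOrbit (by simpa using hk.le)
  have hgq : (g ^ (1 : ℤ)) q ∈ truncatedOrbit g q k :=
    zpow_apply_mem_truncatedOrbit (by rw [abs_one]; lia)
  simpa using Metric.dist_le_diam_of_mem (finite_truncatedOrbit g q k).isBounded hq hgq

theorem infDist_zpow_apply_truncatedOrbit_le (g : Y ≃ᵢ Y) (q : Y) {n k : ℤ} (hn : |n| ≤ 2 * k) :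
    Metric.infDist ((g ^ n) q) (truncatedOrbit g q k) ≤ dist q ((g ^ k) q) := by
  obtain ⟨hn_lower, hn_upper⟩ := abs_le.mp hn
  rcases le_total 0 n with hn_nonneg | hn_nonpos
  · have hmem : |n - k| ≤ k := abs_le.mpr ⟨by lia, by lia⟩
    calc Metric.infDist ((g ^ n) q) (truncatedOrbit g q k)
        ≤ dist ((g ^ n) q) ((g ^ (n - k)) q) :=
          Metric.infDist_le_dist_of_mem (zpow_apply_mem_truncatedOrbit hmem)
      _ = dist q ((g ^ k) q) := by
          rw [dist_zpow_apply_zpow_apply, sub_sub_cancel_left, dist_zpow_neg_apply]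
  · have hmem : |n + k| ≤ k := abs_le.mpr ⟨by lia, by lia⟩
    calc Metric.infDist ((g ^ n) q) (truncatedOrbit g q k)
        ≤ dist ((g ^ n) q) ((g ^ (n + k)) q) :=
          Metric.infDist_le_dist_of_mem (zpow_apply_mem_truncatedOrbit hmem)
      _ = dist q ((g ^ k) q) := by rw [dist_zpow_apply_zpow_apply, add_sub_cancel_left]

theorem NoAlmostSubgroupAt.mul_diam_le_dist (h : NoAlmostSubgroupAt g q η) {j : ℤ} (hj : j ≠ 0) :
    η * Metric.diam (truncatedOrbit g q |j|) ≤ dist q ((g ^ j) q) := by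
  obtain ⟨i, hi, hexcess⟩ := h j.natAbs (Int.natAbs_pos.mpr hj)
  rw [Int.natCast_natAbs] at hi hexcess
  have htwo : |2 * i| ≤ 2 * |j| := by simpa [abs_mul] using hi
  calc η * Metric.diam (truncatedOrbit g q |j|)
      ≤ Metric.infDist ((g ^ (2 * i)) q) (truncatedOrbit g q |j|) := hexcess
    _ ≤ dist q ((g ^ |j|) q) := infDist_zpow_apply_truncatedOrbit_le g q htwo
    _ = dist q ((g ^ j) q) := dist_zpow_abs_apply g q j

theorem no_small_almost_subgroup_separation_general (hη : 0 ≤ η)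
    (hdisp : r ≤ dist q (g q)) (h : NoAlmostSubgroupAt g q η) :
    Pairwise fun i j : ℤ ↦ η * r ≤ dist ((g ^ i) q) ((g ^ j) q) := by
  intro i j hij
  have hji : j - i ≠ 0 := sub_ne_zero.mpr hij.symm
  calc η * r
      ≤ η * Metric.diam (truncatedOrbit g q |j - i|) := by
        gcongr
        exact hdisp.trans <| dist_apply_le_diam_truncatedOrbit g q (abs_pos.mpr hji)
    _ ≤ dist q ((g ^ (j - i)) q) := h.mul_diam_le_dist hji
    _ = dist ((g ^ i) q) ((g ^ j) q) := (dist_zpow_apply_zpow_apply g q i j).symm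

end

/-- Lemma 3.8(1) of the paper: if the cyclic group generated by a surjective
isometry `g` has no `η`-almost subgroup of one-parameter at `q` (measured with
the one-sided Hausdorff excess), and `d(q, gq) ≥ r`, then all orbit points of
`⟨g⟩` at `q` are `η·r`-separated. -/
theorem no_small_almost_subgroup_separation {Y : Type*} [MetricSpace Y]
    (g : Y ≃ᵢ Y) (q : Y) (η r : ℝ) (hη : 0 < η) (hr : 0 < r)
    (hdisp : r ≤ dist q (g q))
    (hns : ∀ k : ℕ, 0 < k → ∃ i : ℤ, |i| ≤ (k : ℤ) ∧
      η * Metric.diam {y : Y | ∃ m : ℤ, |m| ≤ (k : ℤ) ∧ y = (g ^ m) q}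
        ≤ Metric.infDist ((g ^ (2 * i)) q)
            {y : Y | ∃ m : ℤ, |m| ≤ (k : ℤ) ∧ y = (g ^ m) q}) :
    (∀ j : ℤ, j ≠ 0 → η * r ≤ dist q ((g ^ j) q)) ∧
    (∀ i j : ℤ, i ≠ j → η * r ≤ dist ((g ^ i) q) ((g ^ j) q)) := by
  have hsep := no_small_almost_subgroup_separation_general hη.le hdisp hns
  exact ⟨fun j hj ↦ by simpa using hsep hj.symm, fun _ _ hij ↦ hsep hij⟩
end

section
/- Let Y be a metric space, g a surjective isometry of Y, q ∈ Y, η > 0, N a positive integer, and R ≥ 0. Assume d(q, g^N(q)) ≤ R, and assume max_{i ∈ ℤ, |i| ≤ N} dist(g^{2i}(q), A_N·q) ≥ η·diam(A_N·q), where A_N·q := {g^m(q) : m ∈ ℤ, |m| ≤ N}. Then diam(A_N·q) ≤ R/η; in particular d(q, g^j(q)) ≤ R/η for every integer j with |j| ≤ N. (This is part (2) of Lemma 3.8 of the paper, with the almost-subgroup def ect measured by the one-sided Hausdorff excess.) -/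
/-!
Every integer `k` with `|k| ≤ 2N` differs by exactly `N` from some `m` with `|m| ≤ N`. As `g` is an
isometry, the point `g^k q` therefore lies within `d(q, g^N q)` of `A_N·q`, so the one-sided
Hausdorff excess of `A_N²·q` over `A_N·q` is at most `d(q, g^N q)`. The no-almost-subgroup condition
bounds this excess below by `η · diam (A_N·q)`.
-/

section SymmOrbit

variable {Y : Type*} [PseudoMetricSpace Y]

/-- The orbit segment `A_N·q = {g^m q : |m| ≤ N}` of a point `q` under the symmetric set of powers
`A_N = {g^m : |m| ≤ N}` of an isometry `g`. -/
def symmOrbit (g : Y ≃ᵢ Y) (N : ℕ) (q : Y) : Set Y :=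
  {y | ∃ m : ℤ, |m| ≤ (N : ℤ) ∧ y = (g ^ m) q}

theorem zpow_apply_mem_symmOrbit (g : Y ≃ᵢ Y) {N : ℕ} (q : Y) {m : ℤ} (hm : |m| ≤ (N : ℤ)) :
    (g ^ m) q ∈ symmOrbit g N q :=
  ⟨m, hm, rfl⟩

theorem self_mem_symmOrbit (g : Y ≃ᵢ Y) (N : ℕ) (q : Y) : q ∈ symmOrbit g N q :=
  ⟨0, by simp, by simp⟩

theorem finite_symmOrbit (g : Y ≃ᵢ Y) (N : ℕ) (q : Y) : (symmOrbit g N q).Finite := by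
  refine ((Set.finite_Icc (-(N : ℤ)) N).image fun m : ℤ => (g ^ m) q).subset ?_
  rintro _ ⟨m, hm, rfl⟩
  exact Set.mem_image_of_mem _ (abs_le.mp hm)

theorem dist_zpow_apply_zpow_add_apply (g : Y ≃ᵢ Y) (m n : ℤ) (q : Y) :
    dist ((g ^ m) q) ((g ^ (m + n)) q) = dist q ((g ^ n) q) := by
  rw [zpow_add, IsometryEquiv.mul_apply, IsometryEquiv.dist_eq]

theorem exists_abs_le_and_add_eq_or_add_eq {k N : ℤ} (hk : |k| ≤ 2 * N) :
    ∃ m : ℤ, |m| ≤ N ∧ (m + N = k ∨ k + N = m) := by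
  rw [abs_le] at hk
  rcases le_total 0 k with k_nonneg | k_nonpos
  · exact ⟨k - N, abs_le.mpr (by lia), .inl (sub_add_cancel k N)⟩
  · exact ⟨k + N, abs_le.mpr (by lia), .inr rfl⟩

theorem infDist_zpow_apply_symmOrbit_le (g : Y ≃ᵢ Y) {N : ℕ} (q : Y) {k : ℤ}
    (hk : |k| ≤ 2 * (N : ℤ)) :
    Metric.infDist ((g ^ k) q) (symmOrbit g N q) ≤ dist q ((g ^ (N : ℤ)) q) := by
  obtain ⟨m, hm, hmk⟩ := exists_abs_le_and_add_eq_or_add_eq hk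
  have dist_eq : dist ((g ^ k) q) ((g ^ m) q) = dist q ((g ^ (N : ℤ)) q) := by
    rcases hmk with rfl | rfl
    · rw [dist_comm, dist_zpow_apply_zpow_add_apply]
    · exact dist_zpow_apply_zpow_add_apply g k N q
  exact (Metric.infDist_le_dist_of_mem (zpow_apply_mem_symmOrbit g q hm)).trans_eq dist_eq

theorem dist_zpow_apply_le_diam_symmOrbit (g : Y ≃ᵢ Y) {N : ℕ} (q : Y) {j : ℤ}
    (hj : |j| ≤ (N : ℤ)) : dist q ((g ^ j) q) ≤ Metric.diam (symmOrbit g N q) :=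
  Metric.dist_le_diam_of_mem (finite_symmOrbit g N q).isBounded (self_mem_symmOrbit g N q)
    (zpow_apply_mem_symmOrbit g q hj)

theorem no_small_almost_subgroup_diam_bound_general (g : Y ≃ᵢ Y) (q : Y) {η R : ℝ} (hη : 0 < η)
    {N : ℕ} (hdisp : dist q ((g ^ (N : ℤ)) q) ≤ R)
    (hns : ∃ k : ℤ, |k| ≤ 2 * (N : ℤ) ∧
      η * Metric.diam (symmOrbit g N q) ≤ Metric.infDist ((g ^ k) q) (symmOrbit g N q)) :
    Metric.diam (symmOrbit g N q) ≤ R / η ∧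
    ∀ j : ℤ, |j| ≤ (N : ℤ) → dist q ((g ^ j) q) ≤ R / η := by
  obtain ⟨k, hk, excess_ge⟩ := hns
  have diam_le : Metric.diam (symmOrbit g N q) ≤ R / η := by
    rw [le_div_iff₀' hη]
    calc η * Metric.diam (symmOrbit g N q)
        ≤ Metric.infDist ((g ^ k) q) (symmOrbit g N q) := excess_ge
      _ ≤ dist q ((g ^ (N : ℤ)) q) := infDist_zpow_apply_symmOrbit_le g q hk
      _ ≤ R := hdisp
  exact ⟨diam_le, fun j hj => (dist_zpow_apply_le_diam_symmOrbit g q hj).trans diam_le⟩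

end SymmOrbit

/-- Lemma 3.8(2) of the paper: if the symmetric set `A_N = {g^m : |m| ≤ N}`
satisfies the no-`η`-almost-subgroup condition at `q` (measured with the
one-sided Hausdorff excess) and `d(q, g^N q) ≤ R`, then the orbit `A_N·q`
has diameter at most `R/η`. -/
theorem no_small_almost_subgroup_diam_bound {Y : Type*} [MetricSpace Y]
    (g : Y ≃ᵢ Y) (q : Y) (η R : ℝ) (hη : 0 < η) (hR : 0 ≤ R)
    (N : ℕ) (hN : 0 < N)
    (hdisp : dist q ((g ^ (N : ℤ)) q) ≤ R)
    (hns : ∃ i : ℤ, |i| ≤ (N : ℤ) ∧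
      η * Metric.diam {y : Y | ∃ m : ℤ, |m| ≤ (N : ℤ) ∧ y = (g ^ m) q}
        ≤ Metric.infDist ((g ^ (2 * i)) q)
            {y : Y | ∃ m : ℤ, |m| ≤ (N : ℤ) ∧ y = (g ^ m) q}) :
    Metric.diam {y : Y | ∃ m : ℤ, |m| ≤ (N : ℤ) ∧ y = (g ^ m) q} ≤ R / η ∧
    ∀ j : ℤ, |j| ≤ (N : ℤ) → dist q ((g ^ j) q) ≤ R / η := by
  obtain ⟨i, hi, excess_ge⟩ := hns
  exact no_small_almost_subgroup_diam_bound_general g q hη hdisp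
    ⟨2 * i, by rw [abs_mul, abs_two]; lia, excess_ge⟩
end

section
/- Let E be a finite-dimensional real inner product space and let A be a linear isometric automorphism of E. If the operator norm ‖Aᵐ − id‖ is at most 1 for every positive integer m, then A = id. (This is the linear-algebra step behind the claim, used in the paper, that the isometry group of Euclidean space has no nontrivial subgroup of displacement at most 1/20 on the unit ball.) -/
/-! If every power of an isometry `A` moves each vector `v` by at most `c * ‖v‖` with `c < √2`,
then every `Aᵐ v` makes with `v` an angle at most some `θ < π / 2` depending only on `c`. For
`v = A x - x` the sum `v + A v + ⋯ + Aⁿ⁻¹ v` telescopes to `Aⁿ x - x`, which is bounded in `n`,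
while its inner product with `v` grows at least linearly in `n` unless `v = 0`. -/

open Finset RCLike

theorem iterate_sub_self_eq_sum_range {G : Type*} [AddCommGroup G] (f : G →+ G) (n : ℕ) (x : G) :
    f^[n] x - x = ∑ k ∈ range n, f^[k] (f x - x) := by
  simp only [iterate_map_sub, ← Function.iterate_succ_apply]
  exact (sum_range_sub (fun k ↦ f^[k] x) n).symm

theorem toLinearIsometry_pow {R E : Type*} [Semiring R] [SeminormedAddCommGroup E] [Module R E]
    (A : E ≃ₗᵢ[R] E) (n : ℕ) : (A ^ n).toLinearIsometry = A.toLinearIsometry ^ n := by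
  induction n with
  | zero => rfl
  | succ n ih => rw [pow_succ, pow_succ, ← ih]; rfl

section InnerProductSpace

variable {𝕜 E : Type*} [RCLike 𝕜]

theorem le_re_inner_of_norm_sub_le [SeminormedAddCommGroup E] [InnerProductSpace 𝕜 E] {u v : E}
    {c : ℝ} (hnorm : ‖u‖ = ‖v‖) (hsub : ‖u - v‖ ≤ c * ‖v‖) :
    (1 - c ^ 2 / 2) * ‖v‖ ^ 2 ≤ re (inner 𝕜 u v) := by
  have hsq : ‖u - v‖ ^ 2 ≤ (c * ‖v‖) ^ 2 := by gcongr
  rw [norm_sub_sq (𝕜 := 𝕜), hnorm, mul_pow] at hsq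
  linarith

theorem nat_mul_le_re_inner_iterate_sub_self [SeminormedAddCommGroup E] [InnerProductSpace 𝕜 E]
    (f : E →+ E) {x v : E} {a : ℝ} (ha : ∀ k, a ≤ re (inner 𝕜 (f^[k] (f x - x)) v)) (n : ℕ) :
    n * a ≤ re (inner 𝕜 (f^[n] x - x) v) := by
  rw [iterate_sub_self_eq_sum_range, sum_inner, map_sum]
  simpa only [card_range, nsmul_eq_mul] using card_nsmul_le_sum (range n) _ a fun k _ ↦ ha k

variable [NormedAddCommGroup E] [InnerProductSpace 𝕜 E]

theorem isFixedPt_of_le_re_inner_iterate (f : E →+ E) {x : E} {δ C : ℝ} (hδ : 0 < δ)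
    (hbound : ∀ n, ‖f^[n] x - x‖ ≤ C)
    (hinner : ∀ k, δ * ‖f x - x‖ ^ 2 ≤ re (inner 𝕜 (f^[k] (f x - x)) (f x - x))) :
    Function.IsFixedPt f x := by
  by_contra hx
  have hpos : 0 < ‖f x - x‖ := norm_pos_iff.mpr (sub_ne_zero.mpr hx)
  obtain ⟨n, hn⟩ := exists_lt_nsmul (mul_pos hδ (pow_pos hpos 2)) (C * ‖f x - x‖)
  refine hn.not_ge ?_
  calc n • (δ * ‖f x - x‖ ^ 2)
      = n * (δ * ‖f x - x‖ ^ 2) := nsmul_eq_mul _ _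
    _ ≤ re (inner 𝕜 (f^[n] x - x) (f x - x)) := nat_mul_le_re_inner_iterate_sub_self f hinner n
    _ ≤ ‖f^[n] x - x‖ * ‖f x - x‖ := re_inner_le_norm _ _
    _ ≤ C * ‖f x - x‖ := by gcongr; exact hbound n

theorem linear_isometry_powers_near_id_general (A : E →ₗᵢ[𝕜] E) {c : ℝ} (hc : c < √2)
    (h : ∀ m : ℕ, 0 < m →
      ‖(A ^ m).toContinuousLinearMap - ContinuousLinearMap.id 𝕜 E‖ ≤ c) :
    A = LinearIsometry.id := by
  have hc₀ : 0 ≤ c := (norm_nonneg _).trans (h 1 one_pos)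
  have hδ : 0 < 1 - c ^ 2 / 2 := by linarith [(Real.lt_sqrt hc₀).mp hc]
  have hdisp (m : ℕ) (x : E) : ‖A^[m] x - x‖ ≤ c * ‖x‖ := by
    obtain rfl | hm := m.eq_zero_or_pos
    · simpa using mul_nonneg hc₀ (norm_nonneg x)
    · simpa [LinearIsometry.coe_pow] using ContinuousLinearMap.le_of_opNorm_le _ (h m hm) x
  have hnorm (m : ℕ) (x : E) : ‖A^[m] x‖ = ‖x‖ := by
    rw [← LinearIsometry.coe_pow, LinearIsometry.norm_map]
  ext x
  exact isFixedPt_of_le_re_inner_iterate (𝕜 := 𝕜) (A : E →+ E) hδ (fun n ↦ hdisp n x)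
    fun k ↦ le_re_inner_of_norm_sub_le (hnorm k _) (hdisp k _)

end InnerProductSpace

/-- A linear isometric automorphism of a finite-dimensional real inner product
space all of whose powers are within operator-norm distance `1` of the
identity is the identity. -/
theorem linear_isometry_powers_near_id {E : Type*} [NormedAddCommGroup E]
    [InnerProductSpace ℝ E] [FiniteDimensional ℝ E]
    (A : E ≃ₗᵢ[ℝ] E)
    (h : ∀ m : ℕ, 0 < m →
      ‖(A ^ m).toLinearIsometry.toContinuousLinearMap - ContinuousLinearMap.id ℝ E‖ ≤ 1) :
    A = LinearIsometryEquiv.refl ℝ E := by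
  exact LinearIsometryEquiv.toLinearIsometry_injective <| linear_isometry_powers_near_id_general
    _ Real.one_lt_sqrt_two fun m hm ↦ by simpa only [toLinearIsometry_pow] using h m hm
end

section
/- Let X be a metric space, p ∈ X, λ > 0, and let A be a nonempty set of isometries of X (distance-preserving maps of X to itself). For r > 0, let D_{r,p}(A) := sup{ d(f(q), q) : f ∈ A, q ∈ B_r(p) }, the displacement of A on the open ball B_r(p). Assume that sup{ d(f(p), p) : f ∈ A } > 0 and that d(f(q), q) ≤ λ for every f ∈ A and every q ∈ B_1(p). Then there exists r ∈ (0, 1] such that D_{r,p}(A) = λ·r and D_{θ,p}(A) > λ·θ for every θ ∈ (0, r). (This is the critical-rescaling claim, obtained 'by the intermediate value theorem', used repeatedly in the proofs of Theorem 0.4, Proposition 2.7 and Proposition 2.9 of the paper.) -/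
/-!
The displacement `r ↦ D r` on balls about `p` need not be continuous, so the intermediate value
theorem does not apply literally. It is however monotone, so it can only jump upwards. It starts
above the line `r ↦ λ r`, because `D` is bounded below by the positive displacement at `p`, and
ends on or below it; a function that only jumps upwards must meet the line where it first fails
to lie above it.
-/

open Set Filter Topology Metric

section FirstCrossing

variable {α β : Type*} [ConditionallyCompleteLinearOrder α] [TopologicalSpace α]
  [OrderTopology α] {a b : α}

theorem exists_mem_Ioc_isGLB_setOf_le [Preorder β] {f g : α → β} (hab : a < b)
    (hlt : ∀ᶠ x in 𝓝[>] a, g x < f x) (hb : f b ≤ g b) :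
    ∃ r ∈ Ioc a b, IsGLB {x ∈ Ioc a b | f x ≤ g x} r := by
  set S := {x ∈ Ioc a b | f x ≤ g x}
  have b_mem : b ∈ S := ⟨right_mem_Ioc.2 hab, hb⟩
  have isGLB : IsGLB S (sInf S) := isGLB_csInf ⟨b, b_mem⟩ ⟨a, fun _ hx => hx.1.1.le⟩
  obtain ⟨u, hau, hu⟩ := (mem_nhdsGT_iff_exists_Ioo_subset' hab).1 hlt
  have u_le : u ∈ lowerBounds S := fun x hx =>
    not_lt.1 fun hxu => (hu ⟨hx.1.1, hxu⟩).not_ge hx.2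
  exact ⟨sInf S, ⟨hau.trans_le (isGLB.2 u_le), isGLB.1 b_mem⟩, isGLB⟩

theorem exists_eq_and_forall_lt_of_monotoneOn_of_continuousOn [DenselyOrdered α] [LinearOrder β]
    [TopologicalSpace β] [OrderClosedTopology β] {f g : α → β} (hab : a < b)
    (hf : MonotoneOn f (Ioc a b)) (hg : ContinuousOn g (Ioc a b))
    (hlt : ∀ᶠ x in 𝓝[>] a, g x < f x) (hb : f b ≤ g b) :
    ∃ r ∈ Ioc a b, f r = g r ∧ ∀ x ∈ Ioo a r, g x < f x := by
  obtain ⟨r, hr, isGLB⟩ := exists_mem_Ioc_isGLB_setOf_le hab hlt hb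
  have Ioo_subset : Ioo a r ⊆ Ioc a b := fun x hx => ⟨hx.1, hx.2.le.trans hr.2⟩
  have lt_below : ∀ x ∈ Ioo a r, g x < f x := fun x hx =>
    not_le.1 fun hfg => hx.2.not_ge (isGLB.1 ⟨Ioo_subset hx, hfg⟩)
  refine ⟨r, hr, le_antisymm ?_ ?_, lt_below⟩
  · have r_mem : r ∈ closure {x ∈ Ioc a b | f x ≤ g x} :=
      isGLB.mem_closure ⟨b, right_mem_Ioc.2 hab, hb⟩
    have le_right : MapsTo g {x ∈ Ioc a b | f x ≤ g x} (Ici (f r)) := fun x hx =>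
      (hf hr hx.1 (isGLB.1 hx)).trans hx.2
    exact isClosed_Ici.closure_subset
      (((hg r hr).mono (sep_subset _ _)).mem_closure r_mem le_right)
  · have r_mem : r ∈ closure (Ioo a r) := by
      rw [closure_Ioo hr.1.ne]
      exact right_mem_Icc.2 hr.1.le
    have left_le : MapsTo g (Ioo a r) (Iic (f r)) := fun x hx =>
      (lt_below x hx).le.trans (hf (Ioo_subset hx) hr hx.2.le)
    exact isClosed_Iic.closure_subset (((hg r hr).mono Ioo_subset).mem_closure r_mem left_le)

end FirstCrossing

section Displacement

variable {X : Type*} [PseudoMetricSpace X] {A : Set (X → X)} {s t : Set X} {p : X}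

/-- The distances by which the maps in `A` move the points of `s`. -/
def displacements (A : Set (X → X)) (s : Set X) : Set ℝ :=
  {d | ∃ f ∈ A, ∃ q ∈ s, d = dist (f q) q}

/-- The displacement of a family `A` of self-maps on a set `s`, so that `D_{r,p}(A)` is
`displacement A (ball p r)` and the displacement at `p` is `displacement A {p}`. As a supremum of
reals, it is `0` when the displacements are unbounded or when `A` or `s` is empty. -/
noncomputable def displacement (A : Set (X → X)) (s : Set X) : ℝ :=
  sSup (displacements A s)

theorem displacements_subset (hst : s ⊆ t) : displacements A s ⊆ displacements A t :=
  fun _ ⟨f, hf, q, hq, hd⟩ => ⟨f, hf, q, hst hq, hd⟩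

theorem displacement_nonneg : 0 ≤ displacement A s :=
  Real.sSup_nonneg <| by
    rintro _ ⟨f, -, q, -, rfl⟩
    exact dist_nonneg

theorem displacement_le_displacement (ht : BddAbove (displacements A t)) (hst : s ⊆ t) :
    displacement A s ≤ displacement A t :=
  Real.sSup_le (fun _ hd => le_csSup ht (displacements_subset hst hd)) displacement_nonneg

theorem monotoneOn_displacement_ball {R : ℝ} (hR : BddAbove (displacements A (ball p R))) :
    MonotoneOn (fun r => displacement A (ball p r)) (Iic R) := fun _ _ _ hr' hrr' =>
  displacement_le_displacement (hR.mono (displacements_subset (ball_subset_ball hr')))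
    (ball_subset_ball hrr')

theorem displacements_nonempty_of_displacement_pos (h : 0 < displacement A s) :
    (displacements A s).Nonempty := by
  rw [nonempty_iff_ne_empty]
  intro hempty
  rw [displacement, hempty, Real.sSup_empty] at h
  exact h.false

theorem eventually_mul_lt_displacement_ball {R : ℝ} (lam : ℝ) (hR : 0 < R)
    (hbdd : BddAbove (displacements A (ball p R))) (hpos : 0 < displacement A {p}) :
    ∀ᶠ r in 𝓝[>] 0, lam * r < displacement A (ball p r) := by
  have tendsto_zero : Tendsto (fun r => lam * r) (𝓝[>] 0) (𝓝 0) :=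
    ((continuous_const_mul lam).tendsto' 0 0 (mul_zero lam)).mono_left nhdsWithin_le_nhds
  filter_upwards [tendsto_zero.eventually_lt_const hpos, Ioc_mem_nhdsGT hR] with r hlt hr
  exact hlt.trans_le <| displacement_le_displacement
    (hbdd.mono (displacements_subset (ball_subset_ball hr.2)))
    (singleton_subset_iff.2 (mem_ball_self hr.1))

theorem critical_rescaling_general {lam R : ℝ} (hR : 0 < R) (hpos : 0 < displacement A {p})
    (hbd : ∀ f ∈ A, ∀ q ∈ ball p R, dist (f q) q ≤ lam * R) :
    ∃ r ∈ Ioc 0 R, displacement A (ball p r) = lam * r ∧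
      ∀ θ ∈ Ioo 0 r, lam * θ < displacement A (ball p θ) := by
  have le_mul : lam * R ∈ upperBounds (displacements A (ball p R)) := by
    rintro _ ⟨f, hf, q, hq, rfl⟩
    exact hbd f hf q hq
  have nonempty : (displacements A (ball p R)).Nonempty :=
    (displacements_nonempty_of_displacement_pos hpos).mono
      (displacements_subset (singleton_subset_iff.2 (mem_ball_self hR)))
  exact exists_eq_and_forall_lt_of_monotoneOn_of_continuousOn hR
    ((monotoneOn_displacement_ball ⟨_, le_mul⟩).mono Ioc_subset_Iic_self)
    (continuous_const_mul lam).continuousOn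
    (eventually_mul_lt_displacement_ball lam hR ⟨_, le_mul⟩ hpos) (csSup_le nonempty le_mul)

end Displacement

/-- Critical rescaling via the intermediate value theorem: if a nonempty set
`A` of isometries of `X` has positive displacement at `p` and displacement at
most `λ` on the unit ball `B₁(p)`, then there is a critical radius
`r ∈ (0, 1]` with `D_{r,p}(A) = λ·r` and `D_{θ,p}(A) > λ·θ` for all
`θ ∈ (0, r)`.  (Used repeatedly in the proofs of Theorem 0.4, Proposition 2.7
and Proposition 2.9 of the paper.) -/
theorem critical_rescaling {X : Type*} [MetricSpace X] (p : X)
    (lam : ℝ) (hlam : 0 < lam)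
    (A : Set (X → X)) (hA : A.Nonempty) (hiso : ∀ f ∈ A, Isometry f)
    (hpos : 0 < sSup {d : ℝ | ∃ f ∈ A, d = dist (f p) p})
    (hbd : ∀ f ∈ A, ∀ q ∈ Metric.ball p 1, dist (f q) q ≤ lam) :
    ∃ r ∈ Set.Ioc (0 : ℝ) 1,
      sSup {d : ℝ | ∃ f ∈ A, ∃ q ∈ Metric.ball p r, d = dist (f q) q} = lam * r ∧
      ∀ θ ∈ Set.Ioo (0 : ℝ) r,
        lam * θ < sSup {d : ℝ | ∃ f ∈ A, ∃ q ∈ Metric.ball p θ, d = dist (f q) q} := by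
  exact critical_rescaling_general one_pos (by simpa [displacement, displacements] using hpos)
    (by simpa using hbd)
end

section
/- Let V be a metric space, let Φ : V × [0, ∞) → ℝ be continuous, and let R > 0 be such that Φ(v, 0) < R for every v ∈ V. Assume divergence uniformly on compact sets: for every compact K ⊆ V and every M ∈ ℝ there exists T ≥ 0 with Φ(v, t) > M for all v ∈ K and all t ≥ T. Then for every v ∈ V the set {t ≥ 0 : Φ(v, t) = R} is nonempty, bounded and closed (so it has a maximum), and the function F(v) := sup{ t ≥ 0 : Φ(v, t) = R } is upper semicontinuous on V. (This is the upper semicontinuity of the last-crossing-time function F_{r,R}(v) = sup{t > 0 : d((t v)·p, p) = R} established in the proof of Lemma 3.9 of the paper.) -/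
/-!
The crossing times `(v, t)` with `a ≤ t` and `Φ v t = r` form a closed subset of `V × [a, ∞)`, and
over a compact `K ⊆ V` divergence confines them to `K × [a, b]` for some `b`. The last crossing time
of `v` is at least `y` exactly when some crossing time of `v` lies in `[y, b]`, so the superlevel
sets of the last crossing time over `K` are projections of closed sets along the compact `[a, b]`,
hence closed. As the topology of `V` is determined by its compact subsets, this gives upper
semicontinuity on all of `V`.
-/

open Set

theorem isClosed_setOf_exists_mem_of_isCompact {X Y : Type*} [TopologicalSpace X]
    [TopologicalSpace Y] {C : Set (X × Y)} {L : Set Y} (hC : IsClosed C) (hL : IsCompact L) :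
    IsClosed {x | ∃ y ∈ L, (x, y) ∈ C} := by
  have : CompactSpace L := isCompact_iff_compactSpace.mp hL
  have hC_restrict : IsClosed {p : X × L | (p.1, (p.2 : Y)) ∈ C} := hC.preimage (by fun_prop)
  convert isClosedMap_fst_of_compactSpace _ hC_restrict using 1
  ext x
  simp

theorem isClosed_apply_of_isClosed_graph {X Y : Type*} [TopologicalSpace X] [TopologicalSpace Y]
    {S : X → Set Y} (hgraph : IsClosed {p : X × Y | p.2 ∈ S p.1}) (x : X) : IsClosed (S x) :=
  hgraph.preimage (Continuous.prodMk_right x)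

theorem upperSemicontinuous_of_forall_isCompact {X γ : Type*} [TopologicalSpace X]
    [CompactlyCoherentSpace X] [LinearOrder γ] {f : X → γ}
    (hf : ∀ K, IsCompact K → UpperSemicontinuousOn f K) : UpperSemicontinuous f := by
  refine upperSemicontinuous_iff_isClosed_preimage.mpr fun y ↦
    (CompactlyCoherentSpace.isClosed_iff _).mpr fun K hK ↦ ?_
  exact (upperSemicontinuousOn_iff_restrict.mpr (hf K hK)).isClosed_preimage y

section Correspondence

variable {X τ : Type*} [TopologicalSpace X] [ConditionallyCompleteLinearOrder τ]
  [TopologicalSpace τ] [OrderTopology τ]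

theorem le_csSup_iff_exists_le_of_isClosed {s : Set τ} (hs : IsClosed s) (hne : s.Nonempty)
    (hbdd : BddAbove s) {y : τ} : y ≤ sSup s ↔ ∃ t ∈ s, y ≤ t :=
  ⟨fun hy ↦ ⟨sSup s, hs.csSup_mem hne hbdd, hy⟩, fun ⟨_, ht, hyt⟩ ↦ hyt.trans (le_csSup hbdd ht)⟩

theorem upperSemicontinuous_sSup_of_isClosed_graph {S : X → Set τ} {L : Set τ}
    (hgraph : IsClosed {p : X × τ | p.2 ∈ S p.1}) (hne : ∀ x, (S x).Nonempty)
    (hL : IsCompact L) (hSL : ∀ x, S x ⊆ L) : UpperSemicontinuous fun x ↦ sSup (S x) := by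
  refine upperSemicontinuous_iff_isClosed_preimage.mpr fun y ↦ ?_
  have superlevel_eq_projection : (fun x ↦ sSup (S x)) ⁻¹' Ici y =
      {x | ∃ t ∈ L, (x, t) ∈ {p : X × τ | p.2 ∈ S p.1} ∩ Prod.snd ⁻¹' Ici y} := by
    ext x
    have : Nonempty τ := ⟨(hne x).some⟩
    refine (le_csSup_iff_exists_le_of_isClosed (isClosed_apply_of_isClosed_graph hgraph x)
      (hne x) (hL.bddAbove.mono (hSL x))).trans ?_
    exact ⟨fun ⟨t, ht, hyt⟩ ↦ ⟨t, hSL x ht, ht, hyt⟩, fun ⟨t, _, ht, hyt⟩ ↦ ⟨t, ht, hyt⟩⟩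
  rw [superlevel_eq_projection]
  exact isClosed_setOf_exists_mem_of_isCompact
    (hgraph.inter (isClosed_Ici.preimage continuous_snd)) hL

theorem upperSemicontinuous_sSup_of_isClosed_graph_of_forall_isCompact
    [CompactlyCoherentSpace X] {S : X → Set τ}
    (hgraph : IsClosed {p : X × τ | p.2 ∈ S p.1}) (hne : ∀ x, (S x).Nonempty)
    (hS : ∀ K, IsCompact K → ∃ L, IsCompact L ∧ ∀ x ∈ K, S x ⊆ L) :
    UpperSemicontinuous fun x ↦ sSup (S x) := by
  refine upperSemicontinuous_of_forall_isCompact fun K hK ↦ ?_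
  obtain ⟨L, hL, hSL⟩ := hS K hK
  have hgraph_restrict : IsClosed {p : K × τ | p.2 ∈ S p.1} :=
    hgraph.preimage (f := fun p : K × τ ↦ ((p.1 : X), p.2)) (by fun_prop)
  exact upperSemicontinuousOn_iff_restrict.mp <|
    upperSemicontinuous_sSup_of_isClosed_graph hgraph_restrict (fun x ↦ hne x) hL
      fun x ↦ hSL x x.2

end Correspondence

/-- The times `t ≥ a` at which the path `f` is at level `r`. The theorem concerns the paths `Φ v`
with `a = 0`, where the last crossing time `F v` is the supremum of this set. -/
def crossingTimes {τ α : Type*} [Preorder τ] (f : τ → α) (a : τ) (r : α) : Set τ :=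
  {t | a ≤ t ∧ f t = r}

theorem crossingTimes_subset_Icc {τ α : Type*} [LinearOrder τ] {f : τ → α} {a b : τ} {r : α}
    (hb : ∀ t, b ≤ t → f t ≠ r) : crossingTimes f a r ⊆ Icc a b :=
  fun t ht ↦ ⟨ht.1, le_of_not_ge fun hbt ↦ hb t hbt ht.2⟩

theorem crossingTimes_nonempty {τ α : Type*} [ConditionallyCompleteLinearOrder τ]
    [TopologicalSpace τ] [OrderTopology τ] [DenselyOrdered τ] [LinearOrder α] [TopologicalSpace α]
    [OrderClosedTopology α] {f : τ → α} {a b : τ} {r : α} (hf : ContinuousOn f (Icc a b))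
    (hab : a ≤ b) (ha : f a ≤ r) (hb : r ≤ f b) : (crossingTimes f a r).Nonempty :=
  let ⟨t, ht, hft⟩ := intermediate_value_Icc hab hf ⟨ha, hb⟩
  ⟨t, ht.1, hft⟩

theorem isClosed_graph_crossingTimes {V τ α : Type*} [TopologicalSpace V] [TopologicalSpace τ]
    [Preorder τ] [ClosedIciTopology τ] [TopologicalSpace α] [T1Space α] {Φ : V → τ → α} {a : τ}
    (hΦ : ContinuousOn (fun p : V × τ ↦ Φ p.1 p.2) (univ ×ˢ Ici a)) (r : α) :
    IsClosed {p : V × τ | p.2 ∈ crossingTimes (Φ p.1) a r} := by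
  convert hΦ.preimage_isClosed_of_isClosed (isClosed_univ.prod isClosed_Ici)
    (isClosed_singleton (x := r)) using 1
  ext p
  simp [crossingTimes]

theorem last_crossing_time_usc_general {V τ α : Type*} [TopologicalSpace V]
    [CompactlyCoherentSpace V] [ConditionallyCompleteLinearOrder τ] [TopologicalSpace τ]
    [OrderTopology τ] [DenselyOrdered τ] [LinearOrder α] [TopologicalSpace α]
    [OrderClosedTopology α] {Φ : V → τ → α} {a : τ} {r : α}
    (hΦ : ContinuousOn (fun p : V × τ ↦ Φ p.1 p.2) (univ ×ˢ Ici a)) (ha : ∀ v, Φ v a ≤ r)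
    (hdiv : ∀ K : Set V, IsCompact K → ∃ b, ∀ v ∈ K, ∀ t, b ≤ t → r < Φ v t) :
    (∀ v, (crossingTimes (Φ v) a r).Nonempty ∧ BddAbove (crossingTimes (Φ v) a r) ∧
      IsClosed (crossingTimes (Φ v) a r) ∧
      sSup (crossingTimes (Φ v) a r) ∈ crossingTimes (Φ v) a r) ∧
    UpperSemicontinuous fun v ↦ sSup (crossingTimes (Φ v) a r) := by
  have hgraph := isClosed_graph_crossingTimes hΦ r
  have hbounded (K : Set V) (hK : IsCompact K) : ∃ b, ∀ v ∈ K, crossingTimes (Φ v) a r ⊆ Icc a b :=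
    (hdiv K hK).imp fun b hb v hv ↦ crossingTimes_subset_Icc fun t ht ↦ (hb v hv t ht).ne'
  have hne (v : V) : (crossingTimes (Φ v) a r).Nonempty := by
    obtain ⟨b, hb⟩ := hdiv {v} isCompact_singleton
    have hΦv : ContinuousOn (Φ v) (Ici a) := ContinuousOn.uncurry_left v (mem_univ v) hΦ
    exact crossingTimes_nonempty (hΦv.mono Icc_subset_Ici_self) (le_max_left a b) (ha v)
      (hb v rfl _ (le_max_right a b)).le
  refine ⟨fun v ↦ ?_, upperSemicontinuous_sSup_of_isClosed_graph_of_forall_isCompact hgraph hne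
    fun K hK ↦ (hbounded K hK).imp' (Icc a) fun b hb ↦ ⟨isCompact_Icc, hb⟩⟩
  obtain ⟨b, hb⟩ := hbounded {v} isCompact_singleton
  have hbdd : BddAbove (crossingTimes (Φ v) a r) := bddAbove_Icc.mono (hb v rfl)
  have hclosed : IsClosed (crossingTimes (Φ v) a r) :=
    isClosed_apply_of_isClosed_graph (S := fun v ↦ crossingTimes (Φ v) a r) hgraph v
  exact ⟨hne v, hbdd, hclosed, hclosed.csSup_mem (hne v) hbdd⟩

/-- Upper semicontinuity of the last-crossing-time function
`F(v) = sup{t ≥ 0 : Φ(v,t) = R}` from the proof of Lemma 3.9 of the paper: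
if `Φ` is continuous on `V × [0,∞)`, starts below `R`, and diverges uniformly
on compact subsets of `V`, then for each `v` the set `{t ≥ 0 : Φ(v,t) = R}`
is nonempty, bounded and closed (hence has a maximum) and `F` is upper
semicontinuous. -/
theorem last_crossing_time_usc {V : Type*} [MetricSpace V] (Φ : V → ℝ → ℝ)
    (hcont : ContinuousOn (fun p : V × ℝ => Φ p.1 p.2) (Set.univ ×ˢ Set.Ici (0 : ℝ)))
    (R : ℝ) (hR : 0 < R) (h0 : ∀ v : V, Φ v 0 < R)
    (hdiv : ∀ K : Set V, IsCompact K → ∀ M : ℝ, ∃ T : ℝ, 0 ≤ T ∧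
      ∀ v ∈ K, ∀ t : ℝ, T ≤ t → M < Φ v t) :
    (∀ v : V, ({t : ℝ | 0 ≤ t ∧ Φ v t = R}).Nonempty ∧
      BddAbove {t : ℝ | 0 ≤ t ∧ Φ v t = R} ∧
      IsClosed {t : ℝ | 0 ≤ t ∧ Φ v t = R} ∧
      sSup {t : ℝ | 0 ≤ t ∧ Φ v t = R} ∈ {t : ℝ | 0 ≤ t ∧ Φ v t = R}) ∧
    UpperSemicontinuous (fun v : V => sSup {t : ℝ | 0 ≤ t ∧ Φ v t = R}) :=
  last_crossing_time_usc_general hcont (fun v ↦ (h0 v).le) fun K hK ↦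
    (hdiv K hK R).imp fun _ hT ↦ hT.2
end
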